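/- arXiv:1111.6157 — 2 statements merged into one kernel-verified Lean document; each statement's English description precedes it below -/
import Mathlib

section
/- Let u = x_a x_b (a < b) be a squarefree monomial of degree 2 in S, let I = (L^f(u)) be the final lexsegment edge ideal it defines, let t ≥ 1 be an integer, and let G(I^t) = {u_1, …, u_m} be the minimal monomial generating set of I^t listed so that u_1 <_revlex ⋯ <_revlex u_m. Then for every 2 ≤ i ≤ m, the colon ideal (u_1, …, u_{i-1}) : (u_i) equals the ideal generated by the variables x_r with r ≥ min(u_i) + 1 and ν_r(u_i) ≤ t − 1. In particular, every power of a final lexsegment edge ideal has linear quotients. -/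
/-!
Write a product of `t` edges as the sum of a multiset of `t` exponent vectors. Since all edges are
quadrics, the minimal generators of `I ^ t` are exactly these products
(`isMinMonGen_iff_isEdgeProd`); they have degree `2 * t`, and every exponent is at most `t`.

*The variables lie in the colon ideal* (`IsEdgeProd.exchange`). Every edge lives on vertices `≥ a`,
and any two distinct vertices `> a` form an edge. Let `u` be a product of `t` edges with smallest
variable `x_m`, let `r > m` and `ν_r(u) < t`. If some edge `{m, j}` in `u` has `j ≠ r`, replace it
by `{r, j}`. Otherwise some edge `{m, r}` occurs, and since `ν_r(u) < t` some edge `{p, q}` avoids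
`r`, hence also `m`; replace `{m, r}, {p, q}` by `{r, p}, {r, q}`. Either way `u * x_r / x_m` is a
product of `t` edges, and it precedes `u` in the reverse lexicographic order.

*Nothing else lies in it.* If `f` precedes `e` and they differ last at `l`, then
`e l < f l ≤ t`, equality of degrees forces `l > m`, and every monomial multiplying `x^e` into
`(x^f)` is divisible by `x_l`.
-/

open MvPolynomial

/-- `e >ₗₑₓ f` for exponent vectors: at the smallest index where they differ,
`e` has the larger exponent (variables ordered `x_1 > x_2 > ⋯ > x_n`). -/
def ExpLexGT {n : ℕ} (e f : Fin n →₀ ℕ) : Prop :=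
  ∃ i : Fin n, (∀ j : Fin n, j < i → e j = f j) ∧ f i < e i

/-- `e ≥ₗₑₓ f`. -/
def ExpLexGE {n : ℕ} (e f : Fin n →₀ ℕ) : Prop := ExpLexGT e f ∨ e = f

/-- `e <ᵣₑᵥₗₑₓ f` (for monomials of the same degree): at the largest index where
they differ, `e` has the larger exponent. -/
def ExpRevLexLT {n : ℕ} (e f : Fin n →₀ ℕ) : Prop :=
  ∃ l : Fin n, (∀ j : Fin n, l < j → e j = f j) ∧ f l < e l

/-- The monomial `x^e` is a minimal monomial generator of the monomial ideal `J`: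
it lies in `J` and dividing it by any variable takes it out of `J`. -/
def IsMinMonGen {K : Type} [Field K] {n : ℕ} (J : Ideal (MvPolynomial (Fin n) K))
    (e : Fin n →₀ ℕ) : Prop :=
  monomial e (1 : K) ∈ J ∧
    ∀ (i : Fin n) (w : MvPolynomial (Fin n) K), w * X i = monomial e (1 : K) → w ∉ J

/-- Exponent vectors of the edges, that is, of the generators of the final lexsegment edge ideal
of `x_a x_b`. -/
def edgeExps {n : ℕ} (a b : Fin n) : Set (Fin n →₀ ℕ) :=
  {e : Fin n →₀ ℕ | (∀ i : Fin n, e i ≤ 1) ∧ (∑ i : Fin n, e i) = 2 ∧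
    ExpLexGE (Finsupp.single a 1 + Finsupp.single b 1) e}

/-- `e` is the exponent vector of a product of `t` edges, repetitions allowed. -/
def IsEdgeProd {n : ℕ} (a b : Fin n) (t : ℕ) (e : Fin n →₀ ℕ) : Prop :=
  ∃ s : Multiset (Fin n →₀ ℕ), (∀ g ∈ s, g ∈ edgeExps a b) ∧ s.card = t ∧ s.sum = e

lemma edgeExps_eq_pair {n : ℕ} {a b : Fin n} (hab : a < b) {g : Fin n →₀ ℕ}
    (hg : g ∈ edgeExps a b) :
    ∃ i j : Fin n, i ≠ j ∧ a ≤ i ∧ a ≤ j ∧ g = Finsupp.single i 1 + Finsupp.single j 1 := by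
  obtain ⟨h1, h2, h3⟩ := hg
  have hsupp : ∀ i, g i ≠ 0 → a ≤ i := by
    intro i hi
    by_contra! hlt
    have key : ∀ k, k < a →
        (Finsupp.single a 1 + Finsupp.single b 1 : Fin n →₀ ℕ) k = 0 := by
      intro k hk
      simp [hk.ne', (hk.trans hab).ne']
    rcases h3 with ⟨k, hk1, hk2⟩ | h3
    · rcases lt_or_ge i k with hik | hik
      · exact hi ((hk1 i hik).symm.trans (key i hlt))
      · rw [key k (hik.trans_lt hlt)] at hk2
        exact absurd hk2 (Nat.not_lt_zero _)
    · exact hi (h3 ▸ key i hlt)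
  have hcard : g.support.card = 2 := by
    rw [← h2, Finset.card_eq_sum_ones, ← Finset.sum_subset (Finset.subset_univ g.support)
      (fun i _ hi => by simpa using hi)]
    refine Finset.sum_congr rfl fun i hi => ?_
    have := h1 i
    have := Finsupp.mem_support_iff.1 hi
    omega
  obtain ⟨i, j, hij, hs⟩ := Finset.card_eq_two.1 hcard
  have hi : g i ≠ 0 := Finsupp.mem_support_iff.1 (by simp [hs])
  have hj : g j ≠ 0 := Finsupp.mem_support_iff.1 (by simp [hs])
  refine ⟨i, j, hij, hsupp i hi, hsupp j hj, ?_⟩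
  ext k
  have hk := h1 k
  have hks : g k ≠ 0 ↔ k = i ∨ k = j := by
    rw [← Finsupp.mem_support_iff, hs]; simp
  simp only [Finsupp.add_apply, Finsupp.single_apply]
  grind

lemma pair_mem_edgeExps {n : ℕ} {a b : Fin n} (hab : a < b) {i j : Fin n} (hij : i ≠ j)
    (hi : a < i) (hj : a < j) :
    Finsupp.single i 1 + Finsupp.single j 1 ∈ edgeExps a b := by
  refine ⟨fun k => ?_, ?_, Or.inl ⟨a, fun k hk => ?_, ?_⟩⟩
  · simp only [Finsupp.add_apply, Finsupp.single_apply]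
    grind
  · simp [Finset.sum_add_distrib, Finsupp.single_apply]
  · have hkb : k ≠ b := (hk.trans hab).ne
    simp [hk.ne', hkb.symm, (hk.trans hi).ne', (hk.trans hj).ne']
  · simp [Finsupp.single_apply, hi.ne', hj.ne']

/-- Every edge meeting `m`, when all its vertices are `≥ m`, is `{m, j}` with `j > m`. -/
lemma edgeExps_eq_of_min {n : ℕ} {a b : Fin n} (hab : a < b) {g : Fin n →₀ ℕ}
    (hg : g ∈ edgeExps a b) {m : Fin n} (hgm : g m ≠ 0) (hmin : ∀ j, g j ≠ 0 → m ≤ j) :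
    ∃ j, m < j ∧ a ≤ m ∧ g = Finsupp.single m 1 + Finsupp.single j 1 := by
  obtain ⟨i, j, hij, hai, haj, rfl⟩ := edgeExps_eq_pair hab hg
  have hi := hmin i (by simp)
  have hj := hmin j (by simp)
  have : m = i ∨ m = j := by
    by_contra! h
    simp [h.1.symm, h.2.symm] at hgm
  rcases this with rfl | rfl
  · exact ⟨j, lt_of_le_of_ne hj hij, hai, rfl⟩
  · exact ⟨i, lt_of_le_of_ne hi hij.symm, haj, add_comm _ _⟩

lemma Multiset.sum_finsupp_apply {n : ℕ} (s : Multiset (Fin n →₀ ℕ)) (i : Fin n) :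
    s.sum i = (s.map fun g => g i).sum :=
  map_multiset_sum (Finsupp.applyAddHom i : (Fin n →₀ ℕ) →+ ℕ) s

lemma IsEdgeProd.sum_eq {n : ℕ} {a b : Fin n} {t : ℕ} {e : Fin n →₀ ℕ}
    (h : IsEdgeProd a b t e) : ∑ i, e i = 2 * t := by
  obtain ⟨s, hs, rfl, rfl⟩ := h
  induction s using Multiset.induction with
  | empty => simp
  | cons g s ih =>
    have := ih fun x hx => hs x (Multiset.mem_cons_of_mem hx)
    have := (hs g (Multiset.mem_cons_self g s)).2.1
    simp only [Multiset.sum_cons, Finsupp.add_apply, Finset.sum_add_distrib, Multiset.card_cons]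
    omega

lemma IsEdgeProd.apply_le {n : ℕ} {a b : Fin n} {t : ℕ} {e : Fin n →₀ ℕ}
    (h : IsEdgeProd a b t e) (i : Fin n) : e i ≤ t := by
  obtain ⟨s, hs, rfl, rfl⟩ := h
  rw [Multiset.sum_finsupp_apply]
  have := Multiset.sum_le_card_nsmul (s.map fun g => g i) 1 (by
    simp only [Multiset.mem_map]
    rintro x ⟨g, hg, rfl⟩
    exact (hs g hg).1 i)
  simpa using this

/-- For a product of `t` edges with smallest variable `x_m`, and `r > m` with exponent `< t`,
trading one `x_m` for one `x_r` gives again a product of `t` edges. -/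
lemma IsEdgeProd.exchange {n : ℕ} {a b : Fin n} (hab : a < b) {t : ℕ} {e : Fin n →₀ ℕ}
    (h : IsEdgeProd a b t e) {m r : Fin n} (hm : e m ≠ 0) (hmin : ∀ j, e j ≠ 0 → m ≤ j)
    (hmr : m < r) (hr : e r < t) :
    ∃ f, IsEdgeProd a b t f ∧ f + Finsupp.single m 1 = e + Finsupp.single r 1 := by
  obtain ⟨s, hs, rfl, rfl⟩ := h
  have hsmin : ∀ g ∈ s, ∀ j, g j ≠ 0 → m ≤ j := by
    intro g hg j hj
    refine hmin j fun h0 => hj ?_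
    have := Multiset.le_sum_of_mem hg j
    omega
  by_cases hex : ∃ g ∈ s, g m ≠ 0 ∧ g r = 0
  · obtain ⟨g, hg, hgm, hgr⟩ := hex
    obtain ⟨j, hmj, ham, hgj⟩ := edgeExps_eq_of_min hab (hs g hg) hgm (hsmin g hg)
    have hrj : r ≠ j := by
      rintro rfl
      simp [hgj] at hgr
    obtain ⟨s', rfl⟩ := Multiset.exists_cons_of_mem hg
    refine ⟨(Finsupp.single r 1 + Finsupp.single j 1) + s'.sum,
      ⟨(Finsupp.single r 1 + Finsupp.single j 1) ::ₘ s', ?_, by simp, by simp⟩, ?_⟩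
    · intro x hx
      rcases Multiset.mem_cons.1 hx with rfl | hx
      · exact pair_mem_edgeExps hab hrj (ham.trans_lt hmr) (ham.trans_lt hmj)
      · exact hs x (Multiset.mem_cons_of_mem hx)
    · rw [Multiset.sum_cons, hgj]
      abel
  · push Not at hex
    obtain ⟨g, hg, hgm⟩ : ∃ g ∈ s, g m ≠ 0 := by
      by_contra! h0
      refine hm ?_
      rw [Multiset.sum_finsupp_apply]
      refine Multiset.sum_eq_zero ?_
      simpa using h0
    obtain ⟨j, hmj, ham, hgj⟩ := edgeExps_eq_of_min hab (hs g hg) hgm (hsmin g hg)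
    have hjr : j = r := by
      by_contra hne
      exact hex g hg hgm (by simp [hgj, hmr.ne, hne])
    subst hjr
    obtain ⟨h, hh, hhr⟩ : ∃ h ∈ s, h j = 0 := by
      by_contra! h0
      rw [Multiset.sum_finsupp_apply] at hr
      have := Multiset.card_nsmul_le_sum (s := s.map fun g => g j) (a := 1) (by
        simp only [Multiset.mem_map]
        rintro x ⟨g, hg, rfl⟩
        exact Nat.one_le_iff_ne_zero.2 (h0 g hg))
      simp at this
      omega
    have hhm : h m = 0 := by
      by_contra h0
      exact hex h hh h0 hhr
    have hne : h ≠ g := by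
      rintro rfl
      exact hgm hhm
    obtain ⟨p, q, hpq, -, -, hhpq⟩ := edgeExps_eq_pair hab (hs h hh)
    have key : ∀ k, h k ≠ 0 → m < k ∧ j ≠ k := by
      intro k hk
      refine ⟨lt_of_le_of_ne (hsmin h hh k hk) ?_, ?_⟩
      · rintro rfl; exact hk hhm
      · rintro rfl; exact hk hhr
    obtain ⟨hmp, hjp⟩ := key p (by simp [hhpq])
    obtain ⟨hmq, hjq⟩ := key q (by simp [hhpq])
    obtain ⟨s', rfl⟩ := Multiset.exists_cons_of_mem hg
    obtain ⟨s'', rfl⟩ := Multiset.exists_cons_of_mem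
      ((Multiset.mem_cons.1 hh).resolve_left hne)
    refine ⟨_, ⟨(Finsupp.single j 1 + Finsupp.single p 1) ::ₘ
      (Finsupp.single j 1 + Finsupp.single q 1) ::ₘ s'', ?_, by simp, rfl⟩, ?_⟩
    · intro x hx
      rcases Multiset.mem_cons.1 hx with rfl | hx
      · exact pair_mem_edgeExps hab hjp (ham.trans_lt hmr) (ham.trans_lt hmp)
      rcases Multiset.mem_cons.1 hx with rfl | hx
      · exact pair_mem_edgeExps hab hjq (ham.trans_lt hmr) (ham.trans_lt hmq)
      · exact hs x (Multiset.mem_cons_of_mem (Multiset.mem_cons_of_mem hx))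
    · simp only [Multiset.sum_cons, hgj, hhpq]
      abel

lemma span_edgeExps_pow (K : Type) [Field K] {n : ℕ} (a b : Fin n) (t : ℕ) :
    Ideal.span ((fun e : Fin n →₀ ℕ => monomial e (1 : K)) '' edgeExps a b) ^ t =
      Ideal.span ((fun e : Fin n →₀ ℕ => monomial e (1 : K)) '' {e | IsEdgeProd a b t e}) := by
  induction t with
  | zero =>
    rw [pow_zero, Ideal.one_eq_top, eq_comm, Ideal.eq_top_iff_one]
    exact Ideal.subset_span ⟨0, ⟨0, by simp, rfl, rfl⟩, rfl⟩
  | succ t ih =>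
    rw [pow_succ, ih, Ideal.span_mul_span']
    congr 1
    ext w
    simp only [Set.mem_mul, Set.mem_image, Set.mem_ofPred_eq]
    constructor
    · rintro ⟨_, ⟨e, ⟨s, hs, rfl, rfl⟩, rfl⟩, _, ⟨g, hg, rfl⟩, rfl⟩
      refine ⟨g + s.sum, ⟨g ::ₘ s, ?_, by simp, by simp⟩, ?_⟩
      · intro x hx
        rcases Multiset.mem_cons.1 hx with rfl | hx
        exacts [hg, hs x hx]
      · simp [monomial_mul, add_comm]
    · rintro ⟨_, ⟨s, hs, hc, rfl⟩, rfl⟩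
      obtain ⟨g, hg⟩ := Multiset.card_pos_iff_exists_mem.1 (by omega : 0 < s.card)
      obtain ⟨s', rfl⟩ := Multiset.exists_cons_of_mem hg
      have hc' : s'.card = t := by simpa using hc
      refine ⟨_, ⟨s'.sum, ⟨s', fun x hx => hs x (Multiset.mem_cons_of_mem hx), hc', rfl⟩, rfl⟩,
        _, ⟨g, hs g (Multiset.mem_cons_self _ _), rfl⟩, ?_⟩
      simp [monomial_mul, add_comm]

lemma monomial_mem_span_iff {K : Type} [Field K] {n : ℕ} (B : Set (Fin n →₀ ℕ))
    (e : Fin n →₀ ℕ) :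
    monomial e (1 : K) ∈ Ideal.span ((fun e : Fin n →₀ ℕ => monomial e (1 : K)) '' B) ↔
      ∃ f ∈ B, f ≤ e := by
  classical
  rw [mem_ideal_span_monomial_image, support_monomial, if_neg one_ne_zero]
  simp

lemma isMinMonGen_iff_isEdgeProd {K : Type} [Field K] {n : ℕ} (a b : Fin n) (t : ℕ)
    (e : Fin n →₀ ℕ) :
    IsMinMonGen (Ideal.span ((fun e : Fin n →₀ ℕ => monomial e (1 : K)) '' edgeExps a b) ^ t) e ↔
      IsEdgeProd a b t e := by
  rw [span_edgeExps_pow, IsMinMonGen, monomial_mem_span_iff]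
  constructor
  · rintro ⟨⟨f, hf, hfe⟩, hmin⟩
    by_cases heq : f = e
    · exact heq ▸ hf
    obtain ⟨i, hi⟩ : ∃ i, f i < e i := by
      by_contra! h
      exact heq (le_antisymm hfe h)
    have hsub : e - Finsupp.single i 1 + Finsupp.single i 1 = e := by
      ext k
      simp only [Finsupp.add_apply, Finsupp.tsub_apply, Finsupp.single_apply]
      grind
    refine absurd ?_ (hmin i (monomial (e - Finsupp.single i 1) 1) ?_)
    · rw [monomial_mem_span_iff]
      refine ⟨f, hf, fun k => ?_⟩
      have := hfe k
      simp only [Finsupp.tsub_apply, Finsupp.single_apply]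
      grind
    · rw [X, monomial_mul, hsub, one_mul]
  · intro he
    refine ⟨⟨e, he, le_rfl⟩, fun i w hw hmem => ?_⟩
    -- `w` is a monomial of degree `2 * t - 1`, too small for membership.
    have hei : e i ≠ 0 := by
      intro h0
      have := congrArg (coeff e) hw
      rw [coeff_mul_X', if_neg (by simpa using h0), coeff_monomial, if_pos rfl] at this
      exact zero_ne_one this
    have hsub : e - Finsupp.single i 1 + Finsupp.single i 1 = e := by
      ext k
      simp only [Finsupp.add_apply, Finsupp.tsub_apply, Finsupp.single_apply]
      grind
    have hw' : w = monomial (e - Finsupp.single i 1) 1 := by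
      have hX : (X i : MvPolynomial (Fin n) K) ≠ 0 := X_ne_zero i
      apply mul_right_cancel₀ hX
      rw [hw, X, monomial_mul, hsub, one_mul]
    rw [hw', monomial_mem_span_iff] at hmem
    obtain ⟨f, hf, hfe⟩ := hmem
    have h1 := IsEdgeProd.sum_eq hf
    have h2 := he.sum_eq
    have h3 : ∑ k, f k ≤ ∑ k, (e - Finsupp.single i 1 : Fin n →₀ ℕ) k := Finset.sum_le_sum fun k _ => hfe k
    have h4 : ∑ k, (e - Finsupp.single i 1 : Fin n →₀ ℕ) k + 1 = ∑ k, e k := by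
      conv_rhs => rw [← hsub]
      simp [Finset.sum_add_distrib, Finsupp.single_apply]
    omega

/-- For the final lexsegment edge ideal `I = (L^f(x_a x_b))`, a power `I^t`, and a
minimal monomial generator `u = x^e` of `I^t` with smallest variable `x_m`, the colon
ideal of the (revlex-)earlier minimal generators by `u` is generated by the variables
`x_r` with `r > m` and `ν_r(u) ≤ t - 1`.  (In particular `I^t` has linear quotients.) -/
theorem stmt_2 {K : Type} [Field K] {n : ℕ} (a b : Fin n) (hab : a < b)
    (I : Ideal (MvPolynomial (Fin n) K))
    (hI : I = Ideal.span ((fun e : Fin n →₀ ℕ => monomial e (1 : K)) ''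
      {e : Fin n →₀ ℕ | (∀ i : Fin n, e i ≤ 1) ∧ (∑ i : Fin n, e i) = 2 ∧
        ExpLexGE (Finsupp.single a 1 + Finsupp.single b 1) e}))
    (t : ℕ) (ht : 1 ≤ t)
    (e : Fin n →₀ ℕ) (he : IsMinMonGen (I ^ t) e)
    (m : Fin n) (hm : e m ≠ 0) (hmmin : ∀ j : Fin n, e j ≠ 0 → m ≤ j) :
    Submodule.colon
      (Ideal.span {w : MvPolynomial (Fin n) K |
        ∃ f : Fin n →₀ ℕ, IsMinMonGen (I ^ t) f ∧ ExpRevLexLT f e ∧ w = monomial f (1 : K)})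
      (Ideal.span {monomial e (1 : K)}) =
    Ideal.span {w : MvPolynomial (Fin n) K |
      ∃ r : Fin n, m < r ∧ e r + 1 ≤ t ∧ w = X r} := by
  have hgen : ∀ f, IsMinMonGen (I ^ t) f ↔ IsEdgeProd a b t f := by
    intro f
    rw [hI]
    exact isMinMonGen_iff_isEdgeProd a b t f
  rw [hgen] at he
  simp only [hgen]
  have hJ : {w : MvPolynomial (Fin n) K |
      ∃ f : Fin n →₀ ℕ, IsEdgeProd a b t f ∧ ExpRevLexLT f e ∧ w = monomial f (1 : K)} =
      (fun f : Fin n →₀ ℕ => monomial f (1 : K)) '' {f | IsEdgeProd a b t f ∧ ExpRevLexLT f e} := by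
    ext w
    simp only [Set.mem_ofPred_eq, Set.mem_image, and_assoc, eq_comm]
  have hV : {w : MvPolynomial (Fin n) K | ∃ r : Fin n, m < r ∧ e r + 1 ≤ t ∧ w = X r} =
      X '' {r : Fin n | m < r ∧ e r + 1 ≤ t} := by
    ext w
    simp only [Set.mem_ofPred_eq, Set.mem_image, and_assoc, eq_comm]
  rw [hJ, hV]
  have hcolon : ∀ (J : Ideal (MvPolynomial (Fin n) K)) (p : MvPolynomial (Fin n) K),
      p ∈ Submodule.colon J (Ideal.span {monomial e (1 : K)} : Set (MvPolynomial (Fin n) K)) ↔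
        p * monomial e (1 : K) ∈ J := by
    intro J p
    rw [Ideal.span, Submodule.colon_span, Submodule.mem_colon_singleton, smul_eq_mul]
  apply le_antisymm
  · intro p hp
    rw [hcolon, mem_ideal_span_monomial_image] at hp
    rw [mem_ideal_span_X_image]
    intro d hd
    obtain ⟨f, ⟨hf, l, hl, hel⟩, hfd⟩ := hp (d + e) (by
      rw [mem_support_iff, coeff_mul_monomial, mul_one]
      exact mem_support_iff.1 hd)
    have hfl := hf.apply_le l
    have hfdl : f l ≤ d l + e l := hfd l
    refine ⟨l, ⟨?_, by omega⟩, by omega⟩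
    -- If `l ≤ m`, then `e ≤ f` everywhere and strictly at `l`, although the degrees agree.
    by_contra! hlm
    have hlt : ∑ k, e k < ∑ k, f k := by
      refine Finset.sum_lt_sum (fun k _ => ?_) ⟨l, Finset.mem_univ l, hel⟩
      rcases lt_trichotomy l k with hlk | rfl | hkl
      · exact (hl k hlk).ge
      · exact hel.le
      · by_contra hk
        exact absurd (hmmin k (by omega)) (not_le.2 (hkl.trans_le hlm))
    rw [he.sum_eq, hf.sum_eq] at hlt
    exact lt_irrefl _ hlt
  · rw [Ideal.span_le]
    rintro _ ⟨r, ⟨hmr, hr⟩, rfl⟩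
    rw [SetLike.mem_coe, hcolon]
    obtain ⟨f, hf, hfe⟩ := he.exchange hab hm hmmin hmr hr
    rw [X, monomial_mul, one_mul, monomial_mem_span_iff]
    refine ⟨f, ⟨hf, r, fun k hk => ?_, ?_⟩, ?_⟩
    · have := DFunLike.congr_fun hfe k
      simpa [Finsupp.single_apply, hk.ne, (hmr.trans hk).ne] using this
    · have := DFunLike.congr_fun hfe r
      simp [hmr.ne] at this
      omega
    · rw [add_comm, ← hfe]
      exact le_self_add
end

section
/- Let d ≥ 1, n ≥ d + 2, let Ḡ be the anti-d-path on vertex set [n] and I = I(Ḡ) = (x_i x_j : i + d < j) its edge ideal in S. Let k ≥ 1 and let u = x_{i_1} ⋯ x_{i_k} x_{j_1} ⋯ x_{j_k} be a minimal monomial generator of I^k, where i_1 ≤ ⋯ ≤ i_k ≤ j_1 ≤ ⋯ ≤ j_k and i_r + d < j_r for all r. Then the colon ideal ( w : w a minimal monomial generator of I^k with w >_lex u ) : (u) equals the ideal generated by the variables x_s with 1 ≤ s ≤ i_k − 1 together with the variables x_s such that i_r + d < s < j_r for some 1 ≤ r ≤ k. -/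
/-! The minimal generators of `I ^ k` are the products of `k` edges, all of degree `2k`
(`isMinMonGen_iff`), and everything in sight is a monomial ideal.

If `s < i_k`, the edge `x_{i_k} x_{j_k}` of `u` can be replaced by `x_s x_{j_k}`; if
`i_r + d < s < j_r`, the edge `x_{i_r} x_{j_r}` can be replaced by `x_{i_r} x_s`. Either way
`x_s u = x_t w` with `w` an edge product and `s < t`, so `w` is lex-greater than `u` and `x_s`
lies in the colon ideal.

Conversely, let `w` be a lex-greater edge product and `s` the first index where it differs from
`u`. Then `x_s` divides `w / gcd(w, u)`, and `first_difference` shows that `x_s` is one of the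
listed variables. Otherwise `i_k ≤ s`. By degrees `s < j_r` for some `r`; for the least such `r`
one has `s ≤ i_r + d`. The window `[i_r, s]` contains `i_r, …, i_k, j_1, …, j_{r-1}`, so `u` has
weight at least `k` on it, hence `w` has weight at least `k + 1`. But each of the `k` edges of `w`
has at most one endpoint in the window. -/

open MvPolynomial

/-- Exponent vectors of products of `k` edges `x_a x_b`, `a + d < b`, of the anti-`d`-path. -/
def edgeSums (n d k : ℕ) : Set (Fin n →₀ ℕ) :=
  {g | ∃ a b : Fin k → Fin n, (∀ r, (a r : ℕ) + d < (b r : ℕ)) ∧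
    g = (∑ r : Fin k, Finsupp.single (a r) 1) + ∑ r : Fin k, Finsupp.single (b r) 1}

theorem sum_edge_exponent {n k : ℕ} (a b : Fin k → Fin n) (A : Finset (Fin n)) :
    ∑ t ∈ A, ((∑ r : Fin k, Finsupp.single (a r) 1) +
      ∑ r : Fin k, Finsupp.single (b r) 1 : Fin n →₀ ℕ) t =
    ∑ r : Fin k, ((if a r ∈ A then 1 else 0) + (if b r ∈ A then 1 else 0)) := by
  simp only [Finsupp.add_apply, Finsupp.finsetSum_apply, Finset.sum_add_distrib]
  congr 1 <;>
  · rw [Finset.sum_comm]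
    refine Finset.sum_congr rfl fun r _ => ?_
    simp [Finsupp.single_apply]

theorem degree_of_mem_edgeSums {n d k : ℕ} {g : Fin n →₀ ℕ} (hg : g ∈ edgeSums n d k) :
    ∑ t, g t = 2 * k := by
  obtain ⟨a, b, -, rfl⟩ := hg
  rw [sum_edge_exponent]
  simp [mul_comm]

theorem edgeIdeal_pow {K : Type} [Field K] (n d k : ℕ) :
    (Ideal.span {w : MvPolynomial (Fin n) K |
      ∃ i j : Fin n, (i : ℕ) + d < (j : ℕ) ∧ w = X i * X j}) ^ k =
    Ideal.span ((fun g => monomial g (1 : K)) '' edgeSums n d k) := by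
  have hprod : ∀ a b : Fin k → Fin n,
      monomial ((∑ r : Fin k, Finsupp.single (a r) 1) +
        ∑ r : Fin k, Finsupp.single (b r) 1) (1 : K) = ∏ r, (X (a r) * X (b r)) := by
    intro a b
    rw [← Finset.sum_add_distrib, monomial_sum_one]
    simp [X, monomial_mul]
  rw [Ideal.span, Submodule.span_pow]
  congr 1
  ext w
  rw [Set.mem_pow]
  constructor
  · rintro ⟨f, rfl⟩
    choose a b hab hf using fun r => (f r).2
    refine ⟨_, ⟨a, b, hab, rfl⟩, ?_⟩
    simp only [hprod, List.prod_ofFn]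
    exact Finset.prod_congr rfl fun r _ => (hf r).symm
  · rintro ⟨_, ⟨a, b, hab, rfl⟩, rfl⟩
    refine ⟨fun r => ⟨X (a r) * X (b r), a r, b r, hab r, rfl⟩, ?_⟩
    simp only [hprod, List.prod_ofFn]

theorem monomial_mem_pow_iff {K : Type} [Field K] {n d k : ℕ} (f : Fin n →₀ ℕ) :
    monomial f (1 : K) ∈ Ideal.span ((fun g => monomial g (1 : K)) '' edgeSums n d k) ↔
      ∃ g ∈ edgeSums n d k, g ≤ f := by
  classical
  rw [mem_ideal_span_monomial_image]
  simp [support_monomial]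

/-- All edge products have the same degree, so none divides another one properly: the minimal
generators of `I ^ k` are exactly the products of `k` edges. -/
theorem isMinMonGen_iff {K : Type} [Field K] {n d k : ℕ} (f : Fin n →₀ ℕ) :
    IsMinMonGen (Ideal.span ((fun g => monomial g (1 : K)) '' edgeSums n d k)) f ↔
      f ∈ edgeSums n d k := by
  constructor
  · rintro ⟨h1, h2⟩
    obtain ⟨g, hg, hgf⟩ := (monomial_mem_pow_iff f).1 h1
    by_contra hf
    have hne : g ≠ f := by rintro rfl; exact hf hg
    obtain ⟨s, hs⟩ : ∃ s, g s < f s := by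
      by_contra! hcon
      exact hne (le_antisymm hgf hcon)
    have hgs : g ≤ f - Finsupp.single s 1 := by
      intro t
      have := hgf t
      by_cases hts : t = s
      · subst hts; simp; omega
      · simpa [Finsupp.single_apply, Ne.symm hts] using this
    refine h2 s (monomial (f - Finsupp.single s 1) 1) ?_
      ((monomial_mem_pow_iff _).2 ⟨g, hg, hgs⟩)
    rw [X, monomial_mul, tsub_add_cancel_of_le, one_mul]
    rw [Finsupp.single_le_iff]; omega
  · intro hf
    refine ⟨(monomial_mem_pow_iff f).2 ⟨f, hf, le_rfl⟩, fun s w hw hmem => ?_⟩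
    -- `x^f / x_s` is a monomial of `w`, so some edge product divides it, against the degrees
    have hc : coeff f (w * X s) = 1 := by rw [hw]; simp
    rw [coeff_mul_X'] at hc
    split_ifs at hc with hsf
    · have hsup : f - Finsupp.single s 1 ∈ w.support := by
        rw [mem_support_iff, hc]; exact one_ne_zero
      obtain ⟨g, hg, hgf⟩ := mem_ideal_span_monomial_image.1 hmem _ hsup
      have hlt : ∑ t, g t < ∑ t, f t := by
        refine Finset.sum_lt_sum (fun t _ => (hgf t).trans ?_) ⟨s, Finset.mem_univ _, ?_⟩
        · simp
        · have := hgf s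
          have h0 : f s ≠ 0 := by simpa using hsf
          simp at this; omega
      rw [degree_of_mem_edgeSums hg, degree_of_mem_edgeSums hf] at hlt
      exact lt_irrefl _ hlt
    · exact one_ne_zero hc.symm

theorem sum_single_update {n k : ℕ} (i : Fin k → Fin n) (r : Fin k) (s : Fin n) :
    (∑ q : Fin k, Finsupp.single (Function.update i r s q) 1) + Finsupp.single (i r) 1 =
      (∑ q : Fin k, Finsupp.single (i q) 1) + (Finsupp.single s 1 : Fin n →₀ ℕ) := by
  rw [← Finset.add_sum_erase _ _ (Finset.mem_univ r),
    ← Finset.add_sum_erase _ (fun q => Finsupp.single (i q) 1) (Finset.mem_univ r)]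
  have : ∑ q ∈ Finset.univ.erase r, Finsupp.single (Function.update i r s q) 1 =
      ∑ q ∈ Finset.univ.erase r, (Finsupp.single (i q) 1 : Fin n →₀ ℕ) :=
    Finset.sum_congr rfl fun q hq => by
      rw [Function.update_of_ne (Finset.ne_of_mem_erase hq)]
  rw [this, Function.update_self]
  abel

theorem expLexGT_of_exchange {n : ℕ} {e f : Fin n →₀ ℕ} {s t : Fin n} (hst : s < t)
    (h : f + Finsupp.single t 1 = e + Finsupp.single s 1) : ExpLexGT f e := by
  have h' : ∀ q, f q + (if t = q then 1 else 0) = e q + (if s = q then 1 else 0) := fun q => by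
    simpa [Finsupp.single_apply] using DFunLike.congr_fun h q
  refine ⟨s, fun q hq => ?_, ?_⟩
  · simpa [hq.ne', (hq.trans hst).ne'] using h' q
  · have := h' s
    simp [hst.ne'] at this
    omega

/-- The combinatorial core: the first index `s` at which a lex-greater edge product `f` differs
from `e` satisfies `s < i_k` or lies strictly between `i_r + d` and `j_r` for some `r`. -/
theorem first_difference {n d k : ℕ} (i j : Fin k → Fin n)
    (hi : Monotone i) (hij : ∀ r s : Fin k, i r ≤ j s)
    (l : Fin k) (hl : ∀ r, r ≤ l) (f : Fin n →₀ ℕ) (hf : f ∈ edgeSums n d k) (s : Fin n)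
    (hlt : ∀ t < s, f t = ((∑ r : Fin k, Finsupp.single (i r) 1) +
               ∑ r : Fin k, Finsupp.single (j r) 1 : Fin n →₀ ℕ) t)
    (hs : ((∑ r : Fin k, Finsupp.single (i r) 1) +
               ∑ r : Fin k, Finsupp.single (j r) 1 : Fin n →₀ ℕ) s < f s) :
    s < i l ∨ ∃ r : Fin k, (i r : ℕ) + d < (s : ℕ) ∧ (s : ℕ) < (j r : ℕ) := by
  by_contra! hcon
  obtain ⟨hsl, hno⟩ := hcon
  obtain ⟨a, b, hab, rfl⟩ := hf
  -- `f` has more weight than `e` on every set of indices `≤ s` containing `s`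
  have key : ∀ A : Finset (Fin n), s ∈ A → (∀ t ∈ A, t ≤ s) →
      ∑ r : Fin k, ((if i r ∈ A then 1 else 0) + (if j r ∈ A then 1 else 0)) <
      ∑ r : Fin k, ((if a r ∈ A then 1 else 0) + (if b r ∈ A then 1 else 0)) := by
    intro A hsA hA
    rw [← sum_edge_exponent, ← sum_edge_exponent]
    refine Finset.sum_lt_sum (fun t ht => ?_) ⟨s, hsA, hs⟩
    rcases (hA t ht).lt_or_eq with h | rfl
    · exact (hlt t h).ge
    · exact hs.le
  have hex : ∃ r, s < j r := by
    by_contra! hall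
    refine (key (Finset.Iic s) (by simp) (by simp)).not_ge (Finset.sum_le_sum fun r _ => ?_)
    have h1 : i r ≤ s := (hi (hl r)).trans hsl
    rw [if_pos (Finset.mem_Iic.2 h1), if_pos (Finset.mem_Iic.2 (hall r))]
    split_ifs <;> omega
  -- the least such `r`: then `j_q ≤ s` for `q < r`
  obtain ⟨r, hr, hmin⟩ := WellFounded.has_min (wellFounded_lt (α := Fin k)) {r | s < j r} hex
  have hsr : (s : ℕ) ≤ i r + d := by
    by_contra! h
    exact absurd hr (not_lt.2 (hno r h))
  refine (key (Finset.Icc (i r) s) (Finset.mem_Icc.2 ⟨(hi (hl r)).trans hsl, le_rfl⟩)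
    (fun t ht => (Finset.mem_Icc.1 ht).2)).not_ge (Finset.sum_le_sum fun q _ => ?_)
  -- an edge meets the window `[i_r, s]` of length at most `d` at most once
  have h1 : ((if a q ∈ Finset.Icc (i r) s then 1 else 0) +
      (if b q ∈ Finset.Icc (i r) s then 1 else 0)) ≤ 1 := by
    have := hab q
    simp only [Finset.mem_Icc, Fin.le_def]
    split_ifs <;> omega
  refine h1.trans ?_
  rcases lt_or_ge q r with h | h
  · have h2 : j q ≤ s := not_lt.1 fun h' => hmin q h' h
    rw [if_pos (Finset.mem_Icc.2 ⟨hij r q, h2⟩)]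
    omega
  · rw [if_pos (Finset.mem_Icc.2 ⟨hi h, (hi (hl q)).trans hsl⟩)]
    omega

/-- For the edge ideal `I = (x_i x_j : i + d < j)` of the anti-`d`-path on `n` vertices
and a minimal monomial generator `u = x_{i_1} ⋯ x_{i_k} x_{j_1} ⋯ x_{j_k}` of `I^k`
(with `i_1 ≤ ⋯ ≤ i_k ≤ j_1 ≤ ⋯ ≤ j_k` and `i_r + d < j_r`), the colon ideal of the
lex-greater minimal generators by `u` is generated by the variables `x_s` with
`s < i_k` together with the variables `x_s` with `i_r + d < s < j_r` for some `r`. -/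
theorem stmt_6 {K : Type} [Field K] {n d : ℕ} (hd : 1 ≤ d) (hn : d + 2 ≤ n)
    (I : Ideal (MvPolynomial (Fin n) K))
    (hI : I = Ideal.span {w : MvPolynomial (Fin n) K |
      ∃ i j : Fin n, (i : ℕ) + d < (j : ℕ) ∧ w = X i * X j})
    (k : ℕ) (hk : 1 ≤ k) (i j : Fin k → Fin n)
    (hi : Monotone i) (hj : Monotone j) (hij : ∀ r s : Fin k, i r ≤ j s)
    (hd' : ∀ r : Fin k, (i r : ℕ) + d < (j r : ℕ))
    (e : Fin n →₀ ℕ)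
    (hee : e = (∑ r : Fin k, Finsupp.single (i r) 1) +
               ∑ r : Fin k, Finsupp.single (j r) 1)
    (he : IsMinMonGen (I ^ k) e) :
    Submodule.colon
      (Ideal.span {w : MvPolynomial (Fin n) K |
        ∃ f : Fin n →₀ ℕ, IsMinMonGen (I ^ k) f ∧ ExpLexGT f e ∧ w = monomial f (1 : K)})
      (Ideal.span {monomial e (1 : K)}) =
    Ideal.span {w : MvPolynomial (Fin n) K |
      ∃ s : Fin n,
        (s < i (⟨k - 1, by omega⟩ : Fin k) ∨
          ∃ r : Fin k, (i r : ℕ) + d < (s : ℕ) ∧ (s : ℕ) < (j r : ℕ)) ∧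
        w = X s} := by
  classical
  subst hI
  rw [edgeIdeal_pow]
  have hset : {w : MvPolynomial (Fin n) K | ∃ f : Fin n →₀ ℕ,
      IsMinMonGen (Ideal.span ((fun g => monomial g (1 : K)) '' edgeSums n d k)) f ∧
        ExpLexGT f e ∧ w = monomial f (1 : K)} =
      (fun g => monomial g (1 : K)) '' {f | f ∈ edgeSums n d k ∧ ExpLexGT f e} := by
    ext w
    simp only [isMinMonGen_iff, Set.mem_ofPred_eq, Set.mem_image, and_assoc, eq_comm]
  rw [hset]
  set l : Fin k := ⟨k - 1, by omega⟩ with hl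
  have hll : ∀ r, r ≤ l := fun r => by
    have := r.2
    rw [Fin.le_def]; simp only [hl]; omega
  have hsetX : {w : MvPolynomial (Fin n) K | ∃ s : Fin n, (s < i l ∨
        ∃ r : Fin k, (i r : ℕ) + d < (s : ℕ) ∧ (s : ℕ) < (j r : ℕ)) ∧ w = X s} =
      X '' {s : Fin n | s < i l ∨
        ∃ r : Fin k, (i r : ℕ) + d < (s : ℕ) ∧ (s : ℕ) < (j r : ℕ)} := by
    ext w
    simp only [Set.mem_ofPred_eq, Set.mem_image, eq_comm]
  rw [hsetX]
  have hcolon : ∀ (J : Ideal (MvPolynomial (Fin n) K)) (p : MvPolynomial (Fin n) K),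
      p ∈ Submodule.colon J (Ideal.span {monomial e (1 : K)} : Ideal _) ↔
        p * monomial e 1 ∈ J := fun J p => by
    rw [Ideal.mem_colon_span_singleton]
  apply le_antisymm
  · intro p hp
    rw [hcolon, mem_ideal_span_monomial_image] at hp
    rw [mem_ideal_span_X_image]
    intro m hm
    have hme : m + e ∈ (p * monomial e (1 : K)).support := by
      rw [mem_support_iff, coeff_mul_monomial, mul_one]
      exact mem_support_iff.1 hm
    obtain ⟨f, ⟨hf, s, hlt, hs⟩, hle⟩ := hp _ hme
    refine ⟨s, ?_, ?_⟩
    · subst hee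
      exact first_difference i j hi hij l hll f hf s hlt hs
    · have := hle s
      rw [Finsupp.add_apply] at this
      omega
  · rw [Ideal.span_le]
    -- `x_s u = x_t w` for an edge product `w` obtained by lowering one endpoint `t` of an edge to `s`
    have exch : ∀ (f : Fin n →₀ ℕ) (s t : Fin n), f ∈ edgeSums n d k → s < t →
        f + Finsupp.single t 1 = e + Finsupp.single s 1 →
        X s ∈ Submodule.colon (Ideal.span ((fun g => monomial g (1 : K)) ''
          {f | f ∈ edgeSums n d k ∧ ExpLexGT f e})) (Ideal.span {monomial e (1 : K)} : Ideal _) := by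
      intro f s t hf hst h
      rw [hcolon]
      have : (X s * monomial e 1 : MvPolynomial (Fin n) K) = X t * monomial f 1 := by
        rw [X, X, monomial_mul, monomial_mul, add_comm, ← h, add_comm]
      rw [this]
      exact Ideal.mul_mem_left _ _ (Ideal.subset_span ⟨f, ⟨hf, expLexGT_of_exchange hst h⟩, rfl⟩)
    rintro _ ⟨s, hs | ⟨r, h1, h2⟩, rfl⟩
    · refine exch _ s (i l) ⟨Function.update i l s, j, fun r => ?_, rfl⟩ hs ?_
      · by_cases hr : r = l
        · have := hd' l
          rw [hr, Function.update_self]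
          rw [Fin.lt_def] at hs
          omega
        · rw [Function.update_of_ne hr]; exact hd' r
      · rw [add_right_comm, sum_single_update, hee, add_right_comm]
    · refine exch _ s (j r) ⟨i, Function.update j r s, fun q => ?_, rfl⟩ h2 ?_
      · by_cases hr : q = r
        · subst hr
          rwa [Function.update_self]
        · rw [Function.update_of_ne hr]; exact hd' q
      · rw [add_assoc, sum_single_update, hee, add_assoc]
end
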